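/- arXiv:1502.06159 — 7 statements merged into one kernel-verified Lean document; each statement's English description precedes it below -/
import Mathlib

section
/- Let X and Y be metric spaces, (x̄,ȳ) ∈ X×Y, and f : X×Y → ℝ∪{+∞} with f(x̄,ȳ)=0 satisfying (P1) and (P2). Then the strict slopes of f at (x̄,ȳ) satisfy the chain of inequalities |∇f|^◇(x̄,ȳ) ≥ |∇f|^{>+}(x̄,ȳ) ≥ |∇f|^>(x̄,ȳ). -/
open Filter Metric Set Topology ENNReal

/-- The parametric metric `d_ρ((x,y),(u,v)) = max{d(x,u), ρ·d(y,v)}` on a product. -/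
noncomputable def dRho {X Y : Type*} [MetricSpace X] [MetricSpace Y]
    (ρ : ℝ) (p q : X × Y) : ℝ :=
  max (dist p.1 q.1) (ρ * dist p.2 q.2)

/-- The (local) ρ-slope `|∇f|_ρ(x,y)` of `f` at `p = (x,y)`. -/
noncomputable def slopeRho {X Y : Type*} [MetricSpace X] [MetricSpace Y]
    (f : X × Y → EReal) (ρ : ℝ) (p : X × Y) : ℝ≥0∞ :=
  Filter.limsup
    (fun q => ENNReal.ofReal (max ((f p - f q).toReal) 0) / ENNReal.ofReal (dRho ρ q p))
    (𝓝[≠] p)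

/-- The nonlocal ρ-slope `|∇f|_ρ^◇(x,y)` of `f` at `p = (x,y)`. -/
noncomputable def nonlocalSlopeRho {X Y : Type*} [MetricSpace X] [MetricSpace Y]
    (f : X × Y → EReal) (ρ : ℝ) (p : X × Y) : ℝ≥0∞ :=
  ⨆ (q : X × Y) (_ : q ≠ p),
    ENNReal.ofReal (max ((f p - max (f q) 0).toReal) 0) / ENNReal.ofReal (dRho ρ p q)

/-- The strict outer slope `|∇f|^>(x̄,ȳ)`: the limit as `ρ ↓ 0` (equivalently, the
supremum over `ρ > 0`, by monotonicity) of the infimum of ρ-slopes at nearby points. -/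
noncomputable def strictOuterSlope {X Y : Type*} [MetricSpace X] [MetricSpace Y]
    (f : X × Y → EReal) (xbar : X) (ybar : Y) : ℝ≥0∞ :=
  ⨆ (ρ : ℝ) (_ : 0 < ρ),
    ⨅ (p : X × Y) (_ : dist p.1 xbar < ρ ∧ 0 < f p ∧ f p < (ρ : EReal)),
      slopeRho f ρ p

/-- The modified strict outer slope `|∇f|^{>+}(x̄,ȳ)`. -/
noncomputable def modStrictOuterSlope {X Y : Type*} [MetricSpace X] [MetricSpace Y]
    (f : X × Y → EReal) (xbar : X) (ybar : Y) : ℝ≥0∞ :=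
  ⨆ (ρ : ℝ) (_ : 0 < ρ),
    ⨅ (p : X × Y) (_ : dist p.1 xbar < ρ ∧ 0 < f p ∧ f p < (ρ : EReal)),
      max (slopeRho f ρ p)
        (ENNReal.ofReal ((f p).toReal) / ENNReal.ofReal (dist p.1 xbar))

/-- The uniform strict outer slope `|∇f|^◇(x̄,ȳ)`. -/
noncomputable def uniformStrictOuterSlope {X Y : Type*} [MetricSpace X] [MetricSpace Y]
    (f : X × Y → EReal) (xbar : X) (ybar : Y) : ℝ≥0∞ :=
  ⨆ (ρ : ℝ) (_ : 0 < ρ),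
    ⨅ (p : X × Y) (_ : dist p.1 xbar < ρ ∧ 0 < f p ∧ f p < (ρ : EReal)),
      nonlocalSlopeRho f ρ p

/-!
Two kinds of comparison points bound the nonlocal slope at `p = (x, y)` from below. Points near `p`
give the local slope: if `f` is nonnegative near `p`, local difference quotients are nonlocal ones;
otherwise points with `f q < 0` accumulate at `p`, and the quotients `f p / d_ρ(p, q)` blow up.
The reference point gives `f p / d_ρ(p, (x̄, ȳ))`, the minimum of `f p / d(x, x̄)` and
`f p / (ρ d(y, ȳ))`; by (P2) the second term is at least `c / ρ`, which tends to `∞` as `ρ ↓ 0`.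
-/

section

variable {X Y : Type*} [MetricSpace X] [MetricSpace Y] {f : X × Y → EReal} {ρ : ℝ} {p q : X × Y}

theorem dRho_comm (ρ : ℝ) (p q : X × Y) : dRho ρ p q = dRho ρ q p := by
  simp only [dRho, dist_comm]

theorem dRho_mono (p q : X × Y) : Monotone fun ρ : ℝ => dRho ρ p q := fun _ _ h =>
  max_le_max_left _ (mul_le_mul_of_nonneg_right h dist_nonneg)

theorem tendsto_dRho_nhds_zero (ρ : ℝ) (p : X × Y) : Tendsto (dRho ρ p) (𝓝 p) (𝓝 0) := by
  have hcont : Continuous (dRho ρ p) := by unfold dRho; fun_prop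
  simpa [dRho] using hcont.tendsto p

theorem slopeRho_antitone (f : X × Y → EReal) (p : X × Y) :
    Antitone fun ρ : ℝ => slopeRho f ρ p := fun _ _ h =>
  limsup_le_limsup <| .of_forall fun q =>
    ENNReal.div_le_div_left (ENNReal.ofReal_le_ofReal (dRho_mono q p h)) _

theorem div_dRho_le_nonlocalSlopeRho (ρ : ℝ) (hqp : q ≠ p) (hq : f q ≤ 0) :
    ENNReal.ofReal (f p).toReal / ENNReal.ofReal (dRho ρ p q) ≤ nonlocalSlopeRho f ρ p := by
  refine le_trans ?_ (le_iSup₂ q hqp)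
  rw [max_eq_right hq, sub_zero]
  gcongr
  exact le_max_left _ _

theorem slopeRho_le_nonlocalSlopeRho_of_eventually_nonneg (ρ : ℝ)
    (h : ∀ᶠ q in 𝓝[≠] p, 0 ≤ f q) : slopeRho f ρ p ≤ nonlocalSlopeRho f ρ p := by
  refine limsup_le_of_le (by isBoundedDefault) ?_
  filter_upwards [h, self_mem_nhdsWithin] with q hq hqp
  refine le_trans ?_ (le_iSup₂ q hqp)
  rw [max_eq_left hq, dRho_comm]

theorem nonlocalSlopeRho_eq_top_of_frequently_nonpos (ρ : ℝ) (hp : 0 < f p) (hp_top : f p ≠ ⊤)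
    (h : ∃ᶠ q in 𝓝[≠] p, f q ≤ 0) : nonlocalSlopeRho f ρ p = ⊤ := by
  have hpos : ENNReal.ofReal (f p).toReal ≠ 0 :=
    (ENNReal.ofReal_pos.2 (EReal.toReal_pos hp hp_top)).ne'
  have hdist : Tendsto (fun q => ENNReal.ofReal (dRho ρ p q)) (𝓝[≠] p) (𝓝 0) := by
    simpa using ENNReal.tendsto_ofReal
      ((tendsto_dRho_nhds_zero ρ p).mono_left nhdsWithin_le_nhds)
  have hquot : Tendsto (fun q => ENNReal.ofReal (f p).toReal / ENNReal.ofReal (dRho ρ p q))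
      (𝓝[≠] p) (𝓝 ⊤) := by
    rw [← ENNReal.div_zero hpos]
    exact ENNReal.Tendsto.const_div hdist (.inr ENNReal.ofReal_ne_top)
  exact top_le_iff.1 <| le_of_tendsto_of_frequently hquot <|
    (h.and_eventually self_mem_nhdsWithin).mono fun _ hq =>
      div_dRho_le_nonlocalSlopeRho ρ hq.2 hq.1

theorem slopeRho_le_nonlocalSlopeRho (ρ : ℝ) (hp : 0 < f p) (hp_top : f p ≠ ⊤) :
    slopeRho f ρ p ≤ nonlocalSlopeRho f ρ p := by
  by_cases h : ∀ᶠ q in 𝓝[≠] p, 0 ≤ f q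
  · exact slopeRho_le_nonlocalSlopeRho_of_eventually_nonneg ρ h
  · have hneg : ∃ᶠ q in 𝓝[≠] p, f q ≤ 0 :=
      (not_eventually.1 h).mono fun _ hq => (not_le.1 hq).le
    exact le_top.trans_eq (nonlocalSlopeRho_eq_top_of_frequently_nonpos ρ hp hp_top hneg).symm

theorem div_dRho_eq_min (a : ℝ≥0∞) (ρ : ℝ) (p q : X × Y) :
    a / ENNReal.ofReal (dRho ρ p q) =
      min (a / ENNReal.ofReal (dist p.1 q.1)) (a / ENNReal.ofReal (ρ * dist p.2 q.2)) := by
  have hanti : Antitone fun d : ℝ≥0∞ => a / d := fun _ _ h => ENNReal.div_le_div_left h a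
  rw [dRho, ENNReal.ofReal_max]
  exact hanti.map_max

theorem min_div_dist_le_nonlocalSlopeRho {c : ℝ} (hc : 0 ≤ c) (hρ : 0 < ρ) (hp : 0 < f p)
    (hp_top : f p ≠ ⊤) (hq : f q ≤ 0) (hcp : ((c * dist p.2 q.2 : ℝ) : EReal) ≤ f p) :
    min (ENNReal.ofReal (f p).toReal / ENNReal.ofReal (dist p.1 q.1)) (ENNReal.ofReal (c / ρ)) ≤
      nonlocalSlopeRho f ρ p := by
  have hqp : q ≠ p := by
    rintro rfl
    exact hq.not_gt hp
  have hpos : ENNReal.ofReal (f p).toReal ≠ 0 :=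
    (ENNReal.ofReal_pos.2 (EReal.toReal_pos hp hp_top)).ne'
  have hgrowth : c * dist p.2 q.2 ≤ (f p).toReal :=
    EReal.toReal_le_toReal hcp (EReal.coe_ne_bot _) hp_top
  refine le_trans ?_ (div_dRho_le_nonlocalSlopeRho ρ hqp hq)
  rw [div_dRho_eq_min]
  refine min_le_min_left _ ?_
  rw [ENNReal.le_div_iff_mul_le (.inr hpos) (.inr ENNReal.ofReal_ne_top),
    ← ENNReal.ofReal_mul (by positivity), ← mul_assoc, div_mul_cancel₀ c hρ.ne']
  exact ENNReal.ofReal_le_ofReal hgrowth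

theorem exists_small_lt_ofReal_div {c δ : ℝ} {a : ℝ≥0∞} (hc : 0 < c) (hδ : 0 < δ) (ha : a < ⊤) :
    ∃ ρ : ℝ, 0 < ρ ∧ ρ ≤ δ ∧ a < ENNReal.ofReal (c / ρ) := by
  have hlim : Tendsto (fun ρ : ℝ => ENNReal.ofReal (c / ρ)) (𝓝[>] 0) (𝓝 ⊤) :=
    ENNReal.tendsto_ofReal_atTop.comp (tendsto_inv_nhdsGT_zero.const_mul_atTop hc)
  obtain ⟨ρ, haρ, hρ, hρδ⟩ :=
    ((hlim.eventually_const_lt ha).and (Ioc_mem_nhdsGT hδ)).exists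
  exact ⟨ρ, hρ, hρδ, haρ⟩

theorem strictOuterSlope_le_modStrictOuterSlope (f : X × Y → EReal) (xbar : X) (ybar : Y) :
    strictOuterSlope f xbar ybar ≤ modStrictOuterSlope f xbar ybar :=
  iSup₂_mono fun _ _ => iInf₂_mono fun _ _ => le_max_left _ _

theorem modStrictOuterSlope_le_uniformStrictOuterSlope {xbar : X} {ybar : Y}
    (hf : f (xbar, ybar) ≤ 0)
    (hgrowth : ∃ c : ℝ, 0 < c ∧ ∃ ε : ℝ, 0 < ε ∧ ∀ p : X × Y,
      0 < f p → f p < (ε : EReal) → ((c * dist p.2 ybar : ℝ) : EReal) ≤ f p) :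
    modStrictOuterSlope f xbar ybar ≤ uniformStrictOuterSlope f xbar ybar := by
  obtain ⟨c, hc, ε, hε, hgrowth⟩ := hgrowth
  refine le_of_forall_lt_imp_le_of_dense fun a ha => ?_
  obtain ⟨r, hr, har⟩ : ∃ r : ℝ, ∃ _ : 0 < r, a < ⨅ (p : X × Y)
      (_ : dist p.1 xbar < r ∧ 0 < f p ∧ f p < (r : EReal)), max (slopeRho f r p)
        (ENNReal.ofReal (f p).toReal / ENNReal.ofReal (dist p.1 xbar)) := by
    simpa only [modStrictOuterSlope, lt_iSup_iff] using ha
  obtain ⟨ρ, hρ, hρ_le, haρ⟩ := exists_small_lt_ofReal_div hc (lt_min hr hε) har.lt_top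
  have hρr : ρ ≤ r := hρ_le.trans (min_le_left r ε)
  have hρε : ρ ≤ ε := hρ_le.trans (min_le_right r ε)
  refine le_iSup₂_of_le ρ hρ (le_iInf₂ fun p ⟨hpx, hp, hpρ⟩ => ?_)
  have hmax := har.trans_le <| iInf₂_le p
    ⟨hpx.trans_le hρr, hp, hpρ.trans_le (EReal.coe_le_coe_iff.2 hρr)⟩
  rcases lt_max_iff.1 hmax with hslope | hquot
  · calc a ≤ slopeRho f r p := hslope.le
      _ ≤ slopeRho f ρ p := slopeRho_antitone f p hρr
      _ ≤ nonlocalSlopeRho f ρ p := slopeRho_le_nonlocalSlopeRho ρ hp hpρ.ne_top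
  · have hcp := hgrowth p hp (hpρ.trans_le (EReal.coe_le_coe_iff.2 hρε))
    calc a ≤ min (ENNReal.ofReal (f p).toReal / ENNReal.ofReal (dist p.1 xbar))
          (ENNReal.ofReal (c / ρ)) := le_min hquot.le haρ.le
      _ ≤ nonlocalSlopeRho f ρ p :=
        min_div_dist_le_nonlocalSlopeRho (q := (xbar, ybar)) hc.le hρ hp hpρ.ne_top hf hcp

theorem strict_slopes_chain_general {xbar : X} {ybar : Y}
    (hf : f (xbar, ybar) ≤ 0)
    (hP2 : ∃ c : ℝ, 0 < c ∧ ∃ ε : ℝ, 0 < ε ∧ ∀ p : X × Y,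
      0 < f p → f p < (ε : EReal) → ((c * dist p.2 ybar : ℝ) : EReal) ≤ f p) :
    modStrictOuterSlope f xbar ybar ≤ uniformStrictOuterSlope f xbar ybar ∧
    strictOuterSlope f xbar ybar ≤ modStrictOuterSlope f xbar ybar :=
  ⟨modStrictOuterSlope_le_uniformStrictOuterSlope hf hP2,
    strictOuterSlope_le_modStrictOuterSlope f xbar ybar⟩

end

/-- Proposition "Relationships between slopes" (ii):
`|∇f|^◇(x̄,ȳ) ≥ |∇f|^{>+}(x̄,ȳ) ≥ |∇f|^>(x̄,ȳ)`. -/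
theorem strict_slopes_chain {X Y : Type*} [MetricSpace X] [MetricSpace Y]
    (xbar : X) (ybar : Y) (f : X × Y → EReal)
    (hfbot : ∀ p : X × Y, f p ≠ ⊥)
    (hf0 : f (xbar, ybar) = 0)
    (hP1 : ∀ p : X × Y, p.2 ≠ ybar → 0 < f p)
    (hP2 : ∃ c : ℝ, 0 < c ∧ ∃ ε : ℝ, 0 < ε ∧ ∀ p : X × Y,
      0 < f p → f p < (ε : EReal) → ((c * dist p.2 ybar : ℝ) : EReal) ≤ f p) :
    modStrictOuterSlope f xbar ybar ≤ uniformStrictOuterSlope f xbar ybar ∧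
    strictOuterSlope f xbar ybar ≤ modStrictOuterSlope f xbar ybar :=
  strict_slopes_chain_general hf0.le hP2
end

section
/- Let X and Y be metric spaces, (x̄,ȳ) ∈ X×Y, and f : X×Y → ℝ∪{+∞} with f(x̄,ȳ)=0 satisfying (P1) and (P2). Then the error bound modulus is bounded above by the uniform strict outer slope: Er f(x̄,ȳ) ≤ |∇f|^◇(x̄,ȳ). -/
open Filter Metric Set Topology ENNReal

/-- An element of `ℝ∪{+∞}` (i.e. an `EReal` different from `⊥`), viewed in `[0,+∞]`
(negative values are sent to `0`). -/
noncomputable def ERealToENNReal (a : EReal) : ℝ≥0∞ :=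
  if a = ⊤ then ⊤ else ENNReal.ofReal a.toReal

/-- The error bound modulus
`Er f(x̄,ȳ) = liminf_{x→x̄, f(x,y)>0} f(x,y)/d(x,S(f))`, where
`S(f) = {x : f(x,ȳ) ≤ 0}`. -/
noncomputable def errorBoundModulus {X Y : Type*} [MetricSpace X] [MetricSpace Y]
    (f : X × Y → EReal) (xbar : X) (ybar : Y) : ℝ≥0∞ :=
  ⨆ (δ : ℝ) (_ : 0 < δ),
    ⨅ (p : X × Y) (_ : dist p.1 xbar < δ ∧ 0 < f p),
      ERealToENNReal (f p) / ENNReal.ofReal (Metric.infDist p.1 {x : X | f (x, ybar) ≤ 0})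

/-!
For `u ∈ S(f)` the point `(u, ȳ)` is a competitor in the nonlocal slope at `(x, y)`. Taking the
supremum of the resulting quotients over `u` gives
`f(x,y) / max {d(x,S(f)), ρ d(y,ȳ)} ≤ |∇f|_ρ^◇(x,y)`, and (P2) bounds the left-hand side below by
`min {f(x,y) / d(x,S(f)), c / ρ}`. The term `c / ρ` becomes irrelevant as `ρ ↓ 0`.
-/

theorem ERealToENNReal_eq_toENNReal (a : EReal) : ERealToENNReal a = a.toENNReal := rfl

theorem ennreal_div_max (a b c : ℝ≥0∞) : a / max b c = min (a / b) (a / c) :=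
  Antitone.map_max fun _ _ h => ENNReal.div_le_div_left h a

theorem div_max_infEDist_eq_biSup {X : Type*} [PseudoEMetricSpace X] (x : X) (S : Set X)
    (a b : ℝ≥0∞) :
    a / max (infEDist x S) b = ⨆ u ∈ S, a / max (edist x u) b := by
  simp only [infEDist, iInf₂_sup_eq, div_eq_mul_inv, ENNReal.inv_iInf, ENNReal.mul_iSup]

theorem ofReal_div_le_toENNReal_div {a : EReal} {c ρ t : ℝ} (hρ : 0 < ρ) (ht : 0 ≤ t)
    (ha : 0 < a) (hct : ((c * t : ℝ) : EReal) ≤ a) :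
    ENNReal.ofReal (c / ρ) ≤ a.toENNReal / ENNReal.ofReal (ρ * t) := by
  rw [ENNReal.le_div_iff_mul_le (.inr (EReal.toENNReal_ne_zero_iff.2 ha)) (.inl ofReal_ne_top)]
  calc ENNReal.ofReal (c / ρ) * ENNReal.ofReal (ρ * t)
      = ENNReal.ofReal (c * t) := by
        rw [← ENNReal.ofReal_mul' (by positivity)]
        congr 1
        field_simp
    _ ≤ a.toENNReal := EReal.toENNReal_le_toENNReal hct

section NonlocalSlope

variable {X Y : Type*} [MetricSpace X] [MetricSpace Y] {f : X × Y → EReal} {c ρ : ℝ} {p : X × Y}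

theorem ofReal_dRho (ρ : ℝ) (p q : X × Y) :
    ENNReal.ofReal (dRho ρ p q) =
      max (edist p.1 q.1) (ENNReal.ofReal (ρ * dist p.2 q.2)) := by
  rw [dRho, ENNReal.ofReal_max, edist_dist]

theorem toENNReal_div_dRho_le_nonlocalSlopeRho {q : X × Y} (hp : 0 < f p) (hp_top : f p ≠ ⊤)
    (hq : f q ≤ 0) :
    (f p).toENNReal / ENNReal.ofReal (dRho ρ p q) ≤ nonlocalSlopeRho f ρ p := by
  have hqp : q ≠ p := by
    rintro rfl
    exact hq.not_gt hp
  refine le_iSup₂_of_le q hqp (le_of_eq ?_)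
  rw [max_eq_right hq, sub_zero, max_eq_left (EReal.toReal_nonneg hp.le),
    EReal.toENNReal_of_ne_top hp_top]

theorem toennreal_div_max_infDist_le_nonlocalSlopeRho {S : Set X} {y : Y} (hp : 0 < f p)
    (hp_top : f p ≠ ⊤) (hS : S.Nonempty) (hSf : ∀ u ∈ S, f (u, y) ≤ 0) :
    (f p).toENNReal / max (ENNReal.ofReal (infDist p.1 S)) (ENNReal.ofReal (ρ * dist p.2 y)) ≤
      nonlocalSlopeRho f ρ p := by
  rw [infDist, ENNReal.ofReal_toReal (infEDist_ne_top hS), div_max_infEDist_eq_biSup]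
  refine iSup₂_le fun u hu => ?_
  rw [← ofReal_dRho ρ p (u, y)]
  exact toENNReal_div_dRho_le_nonlocalSlopeRho hp hp_top (hSf u hu)

theorem min_toENNReal_div_infDist_le_nonlocalSlopeRho {S : Set X} {y : Y} (hρ : 0 < ρ)
    (hp : 0 < f p) (hp_top : f p ≠ ⊤) (hS : S.Nonempty) (hSf : ∀ u ∈ S, f (u, y) ≤ 0)
    (hc : ((c * dist p.2 y : ℝ) : EReal) ≤ f p) :
    min ((f p).toENNReal / ENNReal.ofReal (infDist p.1 S)) (ENNReal.ofReal (c / ρ)) ≤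
      nonlocalSlopeRho f ρ p :=
  calc min ((f p).toENNReal / ENNReal.ofReal (infDist p.1 S)) (ENNReal.ofReal (c / ρ))
      ≤ min ((f p).toENNReal / ENNReal.ofReal (infDist p.1 S))
          ((f p).toENNReal / ENNReal.ofReal (ρ * dist p.2 y)) :=
        min_le_min_left _ (ofReal_div_le_toENNReal_div hρ dist_nonneg hp hc)
    _ = (f p).toENNReal /
          max (ENNReal.ofReal (infDist p.1 S)) (ENNReal.ofReal (ρ * dist p.2 y)) :=
        (ennreal_div_max _ _ _).symm
    _ ≤ nonlocalSlopeRho f ρ p :=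
        toennreal_div_max_infDist_le_nonlocalSlopeRho hp hp_top hS hSf

end NonlocalSlope

theorem exists_pos_le_lt_ofReal_div {γ : ℝ≥0∞} {c r : ℝ} (hγ : γ ≠ ⊤) (hc : 0 < c)
    (hr : 0 < r) : ∃ ρ, 0 < ρ ∧ ρ ≤ r ∧ γ < ENNReal.ofReal (c / ρ) := by
  have htop : Tendsto (fun ρ : ℝ => ENNReal.ofReal (c / ρ)) (𝓝[>] 0) (𝓝 ⊤) :=
    ENNReal.tendsto_ofReal_atTop.comp (tendsto_inv_nhdsGT_zero.const_mul_atTop hc)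
  obtain ⟨ρ, hγρ, hρ⟩ :=
    ((htop.eventually_const_lt hγ.lt_top).and (Ioc_mem_nhdsGT hr)).exists
  exact ⟨ρ, hρ.1, hρ.2, hγρ⟩

theorem errorBound_le_uniformStrictSlope_general {X Y : Type*} [MetricSpace X] [MetricSpace Y]
    (xbar : X) (ybar : Y) (f : X × Y → EReal) (hS : {x : X | f (x, ybar) ≤ 0}.Nonempty)
    (hP2 : ∃ c : ℝ, 0 < c ∧ ∃ ε : ℝ, 0 < ε ∧ ∀ p : X × Y,
      0 < f p → f p < (ε : EReal) → ((c * dist p.2 ybar : ℝ) : EReal) ≤ f p) :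
    errorBoundModulus f xbar ybar ≤ uniformStrictOuterSlope f xbar ybar := by
  obtain ⟨c, hc, ε, hε, hP2⟩ := hP2
  refine iSup₂_le fun δ hδ => le_of_forall_lt_imp_le_of_dense fun γ hγ => ?_
  obtain ⟨ρ, hρ, hρ_le, hγρ⟩ := exists_pos_le_lt_ofReal_div hγ.ne_top hc (lt_min hδ hε)
  have hρδ : ρ ≤ δ := hρ_le.trans (min_le_left δ ε)
  have hρε : ρ ≤ ε := hρ_le.trans (min_le_right δ ε)
  refine le_iSup₂_of_le ρ hρ (le_iInf₂ fun p ⟨hpx, hp, hpρ⟩ => ?_)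
  have hγp : γ < (f p).toENNReal / ENNReal.ofReal (infDist p.1 {x | f (x, ybar) ≤ 0}) := by
    rw [← ERealToENNReal_eq_toENNReal]
    exact hγ.trans_le (iInf₂_le p ⟨hpx.trans_le hρδ, hp⟩)
  have hcp : ((c * dist p.2 ybar : ℝ) : EReal) ≤ f p :=
    hP2 p hp (hpρ.trans_le (EReal.coe_le_coe hρε))
  exact (le_min hγp.le hγρ.le).trans
    (min_toENNReal_div_infDist_le_nonlocalSlopeRho hρ hp hpρ.ne_top hS (fun _ hu => hu) hcp)

/-- Theorem 3T1 (i): the error bound modulus is bounded above by the uniform strict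
outer slope: `Er f(x̄,ȳ) ≤ |∇f|^◇(x̄,ȳ)`. -/
theorem errorBound_le_uniformStrictSlope {X Y : Type*} [MetricSpace X] [MetricSpace Y]
    (xbar : X) (ybar : Y) (f : X × Y → EReal)
    (hfbot : ∀ p : X × Y, f p ≠ ⊥)
    (hf0 : f (xbar, ybar) = 0)
    (hP1 : ∀ p : X × Y, p.2 ≠ ybar → 0 < f p)
    (hP2 : ∃ c : ℝ, 0 < c ∧ ∃ ε : ℝ, 0 < ε ∧ ∀ p : X × Y,
      0 < f p → f p < (ε : EReal) → ((c * dist p.2 ybar : ℝ) : EReal) ≤ f p) :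
    errorBoundModulus f xbar ybar ≤ uniformStrictOuterSlope f xbar ybar :=
  errorBound_le_uniformStrictSlope_general xbar ybar f ⟨xbar, hf0.le⟩ hP2
end

section
/- Let X and Y be finite dimensional normed linear spaces, F : X ⇉ Y a set-valued mapping, (x̄,ȳ) ∈ gph F, and g : Y → [0,∞) satisfying the standing assumptions. Then the strict subdifferential g-slope of F at (x̄,ȳ) admits the coderivative representation |∂F|_g(x̄,ȳ) = inf{ ‖x*‖ : x* ∈ D̄^{*>}_g F(x̄,ȳ)(S*_{Y*}) }, where S*_{Y*} is the unit sphere of Y* and D̄^{*>}_g F(x̄,ȳ) is the limiting outer g-coderivative of F at (x̄,ȳ). -/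
open Filter Metric Set Topology ENNReal

/-- The graph of a set-valued mapping `F : X ⇉ Y`. -/
def svGraph {X Y : Type*} (F : X → Set Y) : Set (X × Y) := {p : X × Y | p.2 ∈ F p.1}

/-- The Fréchet normal cone to a subset `Ω` of a product of normed spaces (ε-form). -/
def prodNormalCone {X Y : Type*} [NormedAddCommGroup X] [NormedSpace ℝ X]
    [NormedAddCommGroup Y] [NormedSpace ℝ Y]
    (Ω : Set (X × Y)) (p : X × Y) : Set ((X →L[ℝ] ℝ) × (Y →L[ℝ] ℝ)) :=
  {s | p ∈ Ω ∧ ∀ ε : ℝ, 0 < ε → ∀ᶠ q : X × Y in 𝓝[Ω \ {p}] p,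
    s.1 (q.1 - p.1) + s.2 (q.2 - p.2) ≤ ε * ‖q - p‖}

/-- The Fréchet subdifferential of a real-valued function (ε-form). -/
def fSubdiff {Y : Type*} [NormedAddCommGroup Y] [NormedSpace ℝ Y]
    (g : Y → ℝ) (y : Y) : Set (Y →L[ℝ] ℝ) :=
  {ys | ∀ ε : ℝ, 0 < ε → ∀ᶠ v in 𝓝 y, g y + ys (v - y) - ε * ‖v - y‖ ≤ g v}

/-- The subdifferential (g,ρ)-slope
`|∂F|_{g,ρ}(x,y) = inf{‖x*‖ : x* ∈ D*F(x,y)(∂g(y)+ρB*)}`. -/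
noncomputable def subdiffGSlopeRho {X Y : Type*} [NormedAddCommGroup X] [NormedSpace ℝ X]
    [NormedAddCommGroup Y] [NormedSpace ℝ Y]
    (F : X → Set Y) (g : Y → ℝ) (ρ : ℝ) (p : X × Y) : ℝ≥0∞ :=
  ⨅ (xs : X →L[ℝ] ℝ) (_ : ∃ ys vs : Y →L[ℝ] ℝ, vs ∈ fSubdiff g p.2 ∧ ‖ys - vs‖ ≤ ρ ∧
      (xs, -ys) ∈ prodNormalCone (svGraph F) p),
    ENNReal.ofReal ‖xs‖

/-- The strict subdifferential g-slope `|∂F|_g(x̄,ȳ)`. -/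
noncomputable def strictSubdiffGSlope {X Y : Type*} [NormedAddCommGroup X] [NormedSpace ℝ X]
    [NormedAddCommGroup Y] [NormedSpace ℝ Y]
    (F : X → Set Y) (g : Y → ℝ) (xbar : X) (ybar : Y) : ℝ≥0∞ :=
  ⨆ (ρ : ℝ) (_ : 0 < ρ),
    ⨅ (p : X × Y) (_ : p ∈ svGraph F ∧ ybar ∉ F p.1 ∧
        dist p.1 xbar < ρ ∧ dist p.2 ybar < ρ),
      subdiffGSlopeRho F g ρ p

/-- The graph of the limiting outer g-coderivative `D̄^{*>}_g F(x̄,ȳ)`: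
`(y*,x*)` belongs to the graph iff there exist sequences `(x_k,y_k) ∈ gph F` with
`x_k ∉ F⁻¹(ȳ)`, `x*_k ∈ D*F(x_k,y_k)(y*_k)`, `v*_k ∈ ∂g(y_k)`, such that
`(x_k,y_k) → (x̄,ȳ)`, `y*_k − v*_k → 0`, `‖y*‖·x*_k → x*`, and, if `y* ≠ 0`, either
`y*_k ≠ 0` for all `k` and `y*_k/‖y*_k‖ → y*/‖y*‖`, or `y*_k = 0` for all `k`. -/
def limOuterGCoderivGraph {X Y : Type*} [NormedAddCommGroup X] [NormedSpace ℝ X]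
    [NormedAddCommGroup Y] [NormedSpace ℝ Y]
    (F : X → Set Y) (g : Y → ℝ) (xbar : X) (ybar : Y) :
    Set ((Y →L[ℝ] ℝ) × (X →L[ℝ] ℝ)) :=
  {s | ∃ (x : ℕ → X) (y : ℕ → Y) (xs : ℕ → X →L[ℝ] ℝ) (ys : ℕ → Y →L[ℝ] ℝ)
      (vs : ℕ → Y →L[ℝ] ℝ),
    (∀ k : ℕ, (x k, y k) ∈ svGraph F ∧ ybar ∉ F (x k) ∧
      (xs k, -(ys k)) ∈ prodNormalCone (svGraph F) (x k, y k) ∧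
      vs k ∈ fSubdiff g (y k)) ∧
    Filter.Tendsto (fun k => ((x k, y k) : X × Y)) Filter.atTop (𝓝 (xbar, ybar)) ∧
    Filter.Tendsto (fun k => ys k - vs k) Filter.atTop (𝓝 0) ∧
    Filter.Tendsto (fun k => ‖s.1‖ • xs k) Filter.atTop (𝓝 s.2) ∧
    (s.1 ≠ 0 →
      ((∀ k : ℕ, ys k ≠ 0) ∧
        Filter.Tendsto (fun k => ‖ys k‖⁻¹ • ys k) Filter.atTop (𝓝 (‖s.1‖⁻¹ • s.1))) ∨
      (∀ k : ℕ, ys k = 0))}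

/-!
Both sides are read off one filter: the coderivative elements `(x, y, x*, y*, v*)` of `F` and `g`,
as `(x, y) → (x̄, ȳ)` and `y* - v* → 0`. The slope is the lower limit of `‖x*‖` along this filter.
Since bounded sets in a finite dimensional dual are relatively compact, this lower limit is the
infimum of `‖z‖` over the cluster points `z` of `x*`. Finally, a cluster point is the limit of
`x*_k` along a sequence, from which one may extract a subsequence with all `y*_k` zero or with
convergent directions `y*_k / ‖y*_k‖`.
-/

section NormedSpace

variable {ι E : Type*} {l : Filter ι} {f : ι → E}

lemma liminf_enorm_le_of_mapClusterPt [SeminormedAddCommGroup E] {z : E}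
    (hz : MapClusterPt z l f) : liminf (fun i => ‖f i‖ₑ) l ≤ ‖z‖ₑ := by
  refine le_of_forall_gt_imp_ge_of_dense fun c hc => liminf_le_of_frequently_le' ?_
  have near_z : ∀ᶠ w in 𝓝 z, ‖w‖ₑ < c := continuous_enorm.continuousAt.eventually_lt_const hc
  exact (hz.frequently near_z).mono fun _ => le_of_lt

lemma liminf_enorm_eq_iInf_mapClusterPt [SeminormedAddCommGroup E] [ProperSpace E] :
    liminf (fun i => ‖f i‖ₑ) l = ⨅ (z : E) (_ : MapClusterPt z l f), ‖z‖ₑ := by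
  refine le_antisymm (le_iInf₂ fun z => liminf_enorm_le_of_mapClusterPt)
    (le_of_forall_gt_imp_ge_of_dense fun c hc => ?_)
  cases c with
  | top => exact le_top
  | coe r =>
    have frequently_mem : ∃ᶠ i in l, f i ∈ closedBall (0 : E) r :=
      (frequently_lt_of_liminf_lt (h := hc)).mono fun i hi =>
        mem_closedBall_zero_iff.2 (enorm_le_coe.1 hi.le)
    obtain ⟨z, hzr, hz⟩ :=
      (isCompact_closedBall (0 : E) r).exists_mapClusterPt_of_frequently frequently_mem
    exact iInf₂_le_of_le z hz (enorm_le_coe.2 (mem_closedBall_zero_iff.1 hzr))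

lemma exists_subseq_tendsto_normalize_or_eq_zero [NormedAddCommGroup E] [NormedSpace ℝ E]
    [ProperSpace E] [Nontrivial E] (y : ℕ → E) :
    ∃ φ : ℕ → ℕ, StrictMono φ ∧ ∃ u : E, ‖u‖ = 1 ∧
      (((∀ k, y (φ k) ≠ 0) ∧
          Tendsto (fun k => NormedSpace.normalize (y (φ k))) atTop (𝓝 u)) ∨
        ∀ k, y (φ k) = 0) := by
  by_cases hzero : ∃ᶠ k in atTop, y k = 0
  · obtain ⟨φ, hφ, hyφ⟩ := extraction_of_frequently_atTop hzero
    obtain ⟨u, hu⟩ := exists_norm_eq E zero_le_one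
    exact ⟨φ, hφ, u, hu, Or.inr hyφ⟩
  · obtain ⟨φ, hφ, hyφ⟩ := extraction_of_eventually_atTop (not_frequently.1 hzero)
    obtain ⟨u, hu, ψ, hψ, hlim⟩ := (isCompact_sphere (0 : E) 1).tendsto_subseq fun k =>
      mem_sphere_zero_iff_norm.2 (NormedSpace.norm_normalize (hyφ k))
    exact ⟨φ ∘ ψ, hφ.comp hψ, u, mem_sphere_zero_iff_norm.1 hu, Or.inl ⟨fun k => hyφ (ψ k), hlim⟩⟩

end NormedSpace

section Coderivative

variable {X Y : Type*} [NormedAddCommGroup X] [NormedSpace ℝ X]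
  [NormedAddCommGroup Y] [NormedSpace ℝ Y]

/-- The data over which both the strict subdifferential g-slope and the limiting outer
g-coderivative range: a point `(x, y)` of `gph F` with `x ∉ F⁻¹(ȳ)`, functionals
`x* ∈ D*F(x, y)(y*)`, and a subgradient `v* ∈ ∂g(y)`. -/
structure OuterCoderivElement (F : X → Set Y) (g : Y → ℝ) (ybar : Y) where
  point : X × Y
  xs : X →L[ℝ] ℝ
  ys : Y →L[ℝ] ℝ
  vs : Y →L[ℝ] ℝ
  point_mem : point ∈ svGraph F
  ybar_notMem : ybar ∉ F point.1
  mem_normalCone : (xs, -ys) ∈ prodNormalCone (svGraph F) point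
  mem_fSubdiff : vs ∈ fSubdiff g point.2

namespace OuterCoderivElement

variable {F : X → Set Y} {g : Y → ℝ} {xbar : X} {ybar : Y} {xs : X →L[ℝ] ℝ} {ys : Y →L[ℝ] ℝ}

/-- The limiting process `(x, y) → (x̄, ȳ)`, `y* - v* → 0` common to the strict slope and the
limiting coderivative. It is the trivial filter when no such elements exist arbitrarily close to
the limit. -/
noncomputable def limitFilter (F : X → Set Y) (g : Y → ℝ) (xbar : X) (ybar : Y) :
    Filter (OuterCoderivElement F g ybar) :=
  comap (fun t => (t.point, t.ys - t.vs)) (𝓝 ((xbar, ybar), 0))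

instance : (limitFilter F g xbar ybar).IsCountablyGenerated :=
  comap.isCountablyGenerated _ _

lemma tendsto_limitFilter_iff {ι : Type*} {l : Filter ι} {t : ι → OuterCoderivElement F g ybar} :
    Tendsto t l (limitFilter F g xbar ybar) ↔
      Tendsto (fun i => (t i).point) l (𝓝 (xbar, ybar)) ∧
        Tendsto (fun i => (t i).ys - (t i).vs) l (𝓝 0) := by
  rw [limitFilter, tendsto_comap_iff, nhds_prod_eq, tendsto_prod_iff']
  rfl

lemma hasBasis_limitFilter :
    (limitFilter F g xbar ybar).HasBasis (fun ρ : ℝ => 0 < ρ) fun ρ =>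
      {t | dist t.point.1 xbar < ρ ∧ dist t.point.2 ybar < ρ ∧ ‖t.ys - t.vs‖ ≤ ρ} := by
  refine (nhds_basis_ball.comap _).to_hasBasis (fun ρ hρ => ⟨ρ / 2, half_pos hρ, ?_⟩)
    (fun ρ hρ => ⟨ρ, hρ, ?_⟩)
  · rintro t ⟨hx, hy, hv⟩
    simp only [mem_preimage, mem_ball, Prod.dist_eq, max_lt_iff, dist_zero_right]
    exact ⟨⟨by linarith, by linarith⟩, by linarith⟩
  · intro t ht
    simp only [mem_preimage, mem_ball, Prod.dist_eq, max_lt_iff, dist_zero_right] at ht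
    exact ⟨ht.1.1, ht.1.2, ht.2.le⟩

lemma nontrivial (t : OuterCoderivElement F g ybar) : Nontrivial Y :=
  ⟨t.point.2, ybar, ne_of_mem_of_not_mem t.point_mem t.ybar_notMem⟩

lemma strictSubdiffGSlope_eq_liminf :
    strictSubdiffGSlope F g xbar ybar = liminf (fun t => ‖t.xs‖ₑ) (limitFilter F g xbar ybar) := by
  rw [hasBasis_limitFilter.liminf_eq_iSup_iInf]
  simp only [strictSubdiffGSlope, subdiffGSlopeRho, ofReal_norm]
  refine iSup_congr fun ρ => iSup_congr fun _ => le_antisymm ?_ ?_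
  · refine le_iInf₂ fun t ⟨hx, hy, hv⟩ => ?_
    exact iInf₂_le_of_le t.point ⟨t.point_mem, t.ybar_notMem, hx, hy⟩ <|
      iInf₂_le t.xs ⟨t.ys, t.vs, t.mem_fSubdiff, hv, t.mem_normalCone⟩
  · refine le_iInf₂ fun p ⟨hp, hbar, hx, hy⟩ => le_iInf₂ fun xs ⟨ys, vs, hvs, hv, hxs⟩ => ?_
    exact iInf₂_le_of_le ⟨p, xs, ys, vs, hp, hbar, hxs, hvs⟩ ⟨hx, hy, hv⟩ le_rfl

lemma mapClusterPt_of_mem_limOuterGCoderivGraph (hys : ‖ys‖ = 1)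
    (h : (ys, xs) ∈ limOuterGCoderivGraph F g xbar ybar) :
    MapClusterPt xs (limitFilter F g xbar ybar) OuterCoderivElement.xs := by
  obtain ⟨x, y, xk, yk, vk, hk, hpoint, hdiff, hxk, -⟩ := h
  simp only [hys, one_smul] at hxk
  let t (k : ℕ) : OuterCoderivElement F g ybar :=
    ⟨(x k, y k), xk k, yk k, vk k, (hk k).1, (hk k).2.1, (hk k).2.2.1, (hk k).2.2.2⟩
  exact .of_comp (φ := t) (tendsto_limitFilter_iff.2 ⟨hpoint, hdiff⟩) hxk.mapClusterPt

lemma exists_mem_limOuterGCoderivGraph_of_mapClusterPt [FiniteDimensional ℝ Y]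
    (h : MapClusterPt xs (limitFilter F g xbar ybar) OuterCoderivElement.xs) :
    ∃ ys : Y →L[ℝ] ℝ, ‖ys‖ = 1 ∧ (ys, xs) ∈ limOuterGCoderivGraph F g xbar ybar := by
  obtain ⟨t, hxs, ht⟩ := h.exists_seq_tendsto
  have : Nontrivial Y := (t 0).nontrivial
  have : ProperSpace (Y →L[ℝ] ℝ) := FiniteDimensional.proper ℝ _
  obtain ⟨φ, hφ, ys, hys, hdir⟩ := exists_subseq_tendsto_normalize_or_eq_zero fun k => (t k).ys
  obtain ⟨hpoint, hdiff⟩ := tendsto_limitFilter_iff.1 (ht.comp hφ.tendsto_atTop)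
  refine ⟨ys, hys, _, _, _, _, _, fun k => ⟨(t (φ k)).point_mem, (t (φ k)).ybar_notMem,
    (t (φ k)).mem_normalCone, (t (φ k)).mem_fSubdiff⟩, hpoint, hdiff, ?_, fun _ => ?_⟩
  · simpa only [hys, one_smul, Function.comp_def] using hxs.comp hφ.tendsto_atTop
  · simpa only [hys, inv_one, one_smul, NormedSpace.normalize] using hdir

lemma exists_mem_limOuterGCoderivGraph_iff_mapClusterPt [FiniteDimensional ℝ Y] :
    (∃ ys : Y →L[ℝ] ℝ, ‖ys‖ = 1 ∧ (ys, xs) ∈ limOuterGCoderivGraph F g xbar ybar) ↔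
      MapClusterPt xs (limitFilter F g xbar ybar) OuterCoderivElement.xs :=
  ⟨fun ⟨_, hys, h⟩ => mapClusterPt_of_mem_limOuterGCoderivGraph hys h,
    exists_mem_limOuterGCoderivGraph_of_mapClusterPt⟩

end OuterCoderivElement

end Coderivative

open OuterCoderivElement in
theorem strictSubdiffGSlope_eq_coderiv_general {X Y : Type*}
    [NormedAddCommGroup X] [NormedSpace ℝ X] [FiniteDimensional ℝ X]
    [NormedAddCommGroup Y] [NormedSpace ℝ Y] [FiniteDimensional ℝ Y]
    (F : X → Set Y) (xbar : X) (ybar : Y) (g : Y → ℝ) :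
    strictSubdiffGSlope F g xbar ybar =
      ⨅ (xs : X →L[ℝ] ℝ) (_ : ∃ ys : Y →L[ℝ] ℝ, ‖ys‖ = 1 ∧
          (ys, xs) ∈ limOuterGCoderivGraph F g xbar ybar),
        ENNReal.ofReal ‖xs‖ := by
  have : ProperSpace (X →L[ℝ] ℝ) := FiniteDimensional.proper ℝ _
  simp only [exists_mem_limOuterGCoderivGraph_iff_mapClusterPt, ofReal_norm]
  rw [strictSubdiffGSlope_eq_liminf, liminf_enorm_eq_iInf_mapClusterPt]

/-- Proposition `ows` (i): in finite dimensions, the strict subdifferential g-slope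
admits the representation
`|∂F|_g(x̄,ȳ) = inf{‖x*‖ : x* ∈ D̄^{*>}_g F(x̄,ȳ)(S*_{Y*})}`. -/
theorem strictSubdiffGSlope_eq_coderiv {X Y : Type*}
    [NormedAddCommGroup X] [NormedSpace ℝ X] [FiniteDimensional ℝ X]
    [NormedAddCommGroup Y] [NormedSpace ℝ Y] [FiniteDimensional ℝ Y]
    (F : X → Set Y) (xbar : X) (ybar : Y) (g : Y → ℝ)
    (hgraph : ybar ∈ F xbar)
    (hg0 : g ybar = 0)
    (hgnonneg : ∀ y : Y, 0 ≤ g y)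
    (hgcont : ContinuousAt g ybar)
    (hgLip : ∀ y : Y, y ≠ ybar → ∃ (K : NNReal) (ε : ℝ), 0 < ε ∧
      LipschitzOnWith K g (Metric.ball y ε))
    (hP1 : ∀ y : Y, y ≠ ybar → 0 < g y)
    (hP2 : ∃ c : ℝ, 0 < c ∧ ∃ ε : ℝ, 0 < ε ∧ ∀ y : Y,
      0 < g y → g y < ε → c * dist y ybar ≤ g y) :
    strictSubdiffGSlope F g xbar ybar =
      ⨅ (xs : X →L[ℝ] ℝ) (_ : ∃ ys : Y →L[ℝ] ℝ, ‖ys‖ = 1 ∧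
          (ys, xs) ∈ limOuterGCoderivGraph F g xbar ybar),
        ENNReal.ofReal ‖xs‖ :=
  strictSubdiffGSlope_eq_coderiv_general F xbar ybar g
end

section
/- Let X and Y be metric spaces, F : X ⇉ Y a set-valued mapping, (x̄,ȳ) ∈ gph F, φ : [0,∞) → [0,∞) continuously differentiable with φ(0)=0 and φ'(t)>0 for all t≥0, and g(y) := φ(d(y,ȳ)). Then for every ρ>0 and every (x,y) ∈ gph F with y ≠ ȳ, the (g,ρ)-slope of F factorizes as |∇F|_{g,ρ}(x,y) = φ'(d(y,ȳ)) · |∇F|_ρ(x,y). -/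
open Filter Metric Set Topology ENNReal

/-- The (g,ρ)-slope `|∇F|_{g,ρ}(x,y)` of `F` at `p = (x,y) ∈ gph F`. -/
noncomputable def gSlopeRho {X Y : Type*} [MetricSpace X] [MetricSpace Y]
    (F : X → Set Y) (g : Y → ℝ) (ρ : ℝ) (p : X × Y) : ℝ≥0∞ :=
  Filter.limsup
    (fun q => ENNReal.ofReal (max (g p.2 - g q.2) 0) / ENNReal.ofReal (dRho ρ q p))
    (𝓝[svGraph F \ {p}] p)

/-- The ρ-slope `|∇F|_ρ(x,y)` of `F` at `p = (x,y) ∈ gph F` (the case `g = d(·,ȳ)`). -/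
noncomputable def slopeRhoF {X Y : Type*} [MetricSpace X] [MetricSpace Y]
    (F : X → Set Y) (ybar : Y) (ρ : ℝ) (p : X × Y) : ℝ≥0∞ :=
  Filter.limsup
    (fun q => ENNReal.ofReal (max (dist p.2 ybar - dist q.2 ybar) 0) /
      ENNReal.ofReal (dRho ρ q p))
    (𝓝[svGraph F \ {p}] p)

/-!
Factor the increment exactly as `φ s - φ t = dslope φ s t * (s - t)`. Near `s` the divided
difference is close to `φ' s > 0`, so it is nonnegative and comes out of the positive part. The
quotient for `φ ∘ g` is then the quotient for `g` times a factor with a positive finite limit, and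
such a factor passes through the upper limit even when that is infinite.
-/

theorem tendsto_dslope_of_hasDerivAt {𝕜 E : Type*} [NontriviallyNormedField 𝕜]
    [NormedAddCommGroup E] [NormedSpace 𝕜 E] {f : 𝕜 → E} {f' : E} {x : 𝕜}
    (hf : HasDerivAt f f' x) : Tendsto (dslope f x) (𝓝 x) (𝓝 f') := by
  have hcont : ContinuousAt (dslope f x) x := continuousAt_dslope_same.2 hf.differentiableAt
  simpa only [ContinuousAt, dslope_same, hf.deriv] using hcont

section UpperLimits

variable {α : Type*} {l : Filter α}

theorem limsup_mul_eq_of_tendsto {u v : α → ℝ≥0∞} {c : ℝ≥0∞} (hu : Tendsto u l (𝓝 c))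
    (h : c ≠ 0 ∨ limsup v l ≠ ∞) (h' : c ≠ ∞ ∨ limsup v l ≠ 0) :
    limsup (u * v) l = c * limsup v l := by
  rcases l.eq_or_neBot with rfl | _
  · simp
  apply le_antisymm
  · rw [← hu.limsup_eq] at h h' ⊢
    exact ENNReal.limsup_mul_le' h h'
  · calc
      c * limsup v l = limsup v l * liminf u l := by rw [hu.liminf_eq, mul_comm]
      _ ≤ limsup (v * u) l := ENNReal.le_limsup_mul
      _ = limsup (u * v) l := by rw [mul_comm]

variable {φ : ℝ → ℝ} {a s : ℝ}

theorem max_sub_eq_dslope_mul_max_sub {t : ℝ} (h : 0 ≤ dslope φ s t) :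
    max (φ s - φ t) 0 = dslope φ s t * max (s - t) 0 := by
  have hsub : (t - s) * dslope φ s t = φ t - φ s := sub_smul_dslope φ s t
  rw [mul_max_of_nonneg _ _ h, mul_zero]
  congr 1
  linarith

theorem limsup_ofReal_max_comp_sub_div (hφ : HasDerivAt φ a s) (ha : 0 < a) {u : α → ℝ}
    (hu : Tendsto u l (𝓝 s)) (w : α → ℝ≥0∞) :
    limsup (fun q => ENNReal.ofReal (max (φ s - φ (u q)) 0) / w q) l =
      ENNReal.ofReal a * limsup (fun q => ENNReal.ofReal (max (s - u q) 0) / w q) l := by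
  have hslope : Tendsto (fun q => dslope φ s (u q)) l (𝓝 a) :=
    (tendsto_dslope_of_hasDerivAt hφ).comp hu
  have hfactor : (fun q => ENNReal.ofReal (max (φ s - φ (u q)) 0) / w q) =ᶠ[l]
      (fun q => ENNReal.ofReal (dslope φ s (u q))) *
        fun q => ENNReal.ofReal (max (s - u q) 0) / w q := by
    filter_upwards [hslope.eventually_const_le ha] with q hq
    rw [Pi.mul_apply, max_sub_eq_dslope_mul_max_sub hq, ENNReal.ofReal_mul hq, mul_div_assoc]
  rw [limsup_congr hfactor]
  exact limsup_mul_eq_of_tendsto (ENNReal.tendsto_ofReal hslope)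
    (.inl (ENNReal.ofReal_pos.2 ha).ne') (.inl ENNReal.ofReal_ne_top)

end UpperLimits

theorem gSlope_eq_deriv_mul_slope_general {X Y : Type*} [MetricSpace X] [MetricSpace Y]
    (F : X → Set Y) {g : Y → ℝ} {φ : ℝ → ℝ} {a : ℝ} (ρ : ℝ) {p : X × Y}
    (hg : ContinuousAt g p.2) (hφ : HasDerivAt φ a (g p.2)) (ha : 0 < a) :
    gSlopeRho F (fun y => φ (g y)) ρ p = ENNReal.ofReal a * gSlopeRho F g ρ p :=
  limsup_ofReal_max_comp_sub_div hφ ha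
    ((hg.comp continuousAt_snd).tendsto.mono_left nhdsWithin_le_nhds) _

/-- Proposition 6P0: for `g = φ∘d(·,ȳ)`, the (g,ρ)-slope of `F` factorizes as
`|∇F|_{g,ρ}(x,y) = φ'(d(y,ȳ))·|∇F|_ρ(x,y)` whenever `(x,y) ∈ gph F` and `y ≠ ȳ`. -/
theorem gSlope_eq_deriv_mul_slope {X Y : Type*} [MetricSpace X] [MetricSpace Y]
    (F : X → Set Y) (xbar : X) (ybar : Y)
    (hgraph : ybar ∈ F xbar)
    (φ φ' : ℝ → ℝ) (D : EReal)
    (hφ0 : φ 0 = 0)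
    (hφnonneg : ∀ t : ℝ, 0 ≤ t → 0 ≤ φ t)
    (hφc0 : ContinuousWithinAt φ (Set.Ici 0) 0)
    (hderiv : ∀ t : ℝ, 0 < t → HasDerivAt φ (φ' t) t)
    (hφ'pos : ∀ t : ℝ, 0 < t → 0 < φ' t)
    (hφ'cont : ContinuousOn φ' (Set.Ioi 0))
    (hD : Filter.Tendsto (fun t : ℝ => ((φ' t : ℝ) : EReal)) (𝓝[>] (0:ℝ)) (𝓝 D))
    (hDpos : 0 < D)
    (ρ : ℝ) (hρ : 0 < ρ) (p : X × Y) (hp : p ∈ svGraph F) (hy : p.2 ≠ ybar) :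
    gSlopeRho F (fun y => φ (dist y ybar)) ρ p =
      ENNReal.ofReal (φ' (dist p.2 ybar)) * slopeRhoF F ybar ρ p := by
  have hs : 0 < dist p.2 ybar := dist_pos.2 hy
  exact gSlope_eq_deriv_mul_slope_general F ρ (by fun_prop) (hderiv _ hs) (hφ'pos _ hs)
end

section
/- Let Y be a normed linear space, ȳ ∈ Y, φ : [0,∞) → [0,∞) continuously differentiable with φ(0)=0 and φ'(t)>0 for all t≥0, and g(y) := φ(‖y−ȳ‖). Then for every y ≠ ȳ, the Fréchet subdifferential of g is ∂g(y) = φ'(‖y−ȳ‖)·J(y−ȳ), where J is the normalized duality mapping. -/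
open Filter Metric Set Topology

/-- The normalized duality mapping `J(u) = {u* : ‖u*‖ = 1, ⟨u*,u⟩ = ‖u‖}`. -/
def dualityMap {Y : Type*} [NormedAddCommGroup Y] [NormedSpace ℝ Y]
    (u : Y) : Set (Y →L[ℝ] ℝ) :=
  {us | ‖us‖ = 1 ∧ us u = ‖u‖}

/-!
Since the norm is Lipschitz, differentiability of `φ` at `‖y - ybar‖ > 0` with derivative `c` gives
`φ ‖v - ybar‖ = φ ‖y - ybar‖ + c * (‖v - ybar‖ - ‖y - ybar‖) + o(‖v - y‖)`, and the Fréchet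
subdifferential only sees a function up to `o(‖v - y‖)`. It therefore suffices to treat the convex
function `c * ‖v - ybar‖`, whose Fréchet subgradients are its global subgradients. Testing the
subgradient inequality at `v = y + k` and at `v = ybar` shows that a subgradient has norm at most
`c` and takes the value `c * ‖y - ybar‖` at `y - ybar`, so it lies in `c • J(y - ybar)`.
-/

open Asymptotics

section FrechetSubdifferential

variable {Y : Type*} [NormedAddCommGroup Y] [NormedSpace ℝ Y] {f g : Y → ℝ} {y : Y}

theorem fSubdiff_subset_of_isLittleO
    (hfg : (fun v => f v - f y - (g v - g y)) =o[𝓝 y] fun v => v - y) :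
    fSubdiff f y ⊆ fSubdiff g y := by
  intro ys hys ε hε
  filter_upwards [hys (ε / 2) (half_pos hε), hfg.def (half_pos hε)] with v hf hdiff
  have := (le_abs_self _).trans hdiff
  linarith

theorem fSubdiff_eq_of_isLittleO
    (hfg : (fun v => f v - f y - (g v - g y)) =o[𝓝 y] fun v => v - y) :
    fSubdiff f y = fSubdiff g y :=
  (fSubdiff_subset_of_isLittleO hfg).antisymm <| fSubdiff_subset_of_isLittleO <|
    hfg.neg_left.congr_left fun _ => neg_sub _ _

theorem fSubdiff_comp_eq_of_hasDerivAt {φ : ℝ → ℝ} {c : ℝ} (hφ : HasDerivAt φ c (f y))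
    (hf : (fun v => f v - f y) =O[𝓝 y] fun v => v - y) :
    fSubdiff (fun v => φ (f v)) y = fSubdiff (fun v => c * f v) y := by
  have hsub : Tendsto (fun v : Y => v - y) (𝓝 y) (𝓝 0) := tendsto_sub_nhds_zero_iff.mpr tendsto_id
  have hcont : Tendsto f (𝓝 y) (𝓝 (f y)) := tendsto_sub_nhds_zero_iff.mp (hf.trans_tendsto hsub)
  have hexp : (fun v => φ (f v) - φ (f y) - (f v - f y) * c) =o[𝓝 y] fun v => v - y :=
    (hφ.isLittleO.comp_tendsto hcont).trans_isBigO hf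
  exact fSubdiff_eq_of_isLittleO (hexp.congr_left fun v => by ring)

theorem mem_fSubdiff_iff_of_convexOn (hf : ConvexOn ℝ univ f) {ys : Y →L[ℝ] ℝ} :
    ys ∈ fSubdiff f y ↔ ∀ v, f y + ys (v - y) ≤ f v := by
  refine ⟨fun hys v => ?_, fun hys ε hε => .of_forall fun v => ?_⟩
  · have approx (ε : ℝ) (hε : 0 < ε) : f y + ys (v - y) ≤ f v + ε * ‖v - y‖ := by
      have hconvex : ConvexOn ℝ univ fun w => f w - ys w + ε * dist w y :=
        (hf.sub (ys.toLinearMap.concaveOn convex_univ)).add ((convexOn_univ_dist y).smul hε.le)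
      have hlocal : IsLocalMin (fun w => f w - ys w + ε * dist w y) y := by
        filter_upwards [hys ε hε] with w hw
        rw [dist_self, dist_eq_norm]
        rw [map_sub] at hw
        linarith
      have hglobal := IsMinOn.of_isLocalMin_of_convex_univ hlocal hconvex v
      rw [dist_self, dist_eq_norm] at hglobal
      rw [map_sub]
      linarith
    have hlim : Tendsto (fun ε : ℝ => f v + ε * ‖v - y‖) (𝓝[>] 0) (𝓝 (f v)) := by
      have : Continuous fun ε : ℝ => f v + ε * ‖v - y‖ := by fun_prop
      simpa using (this.tendsto 0).mono_left nhdsWithin_le_nhds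
    exact ge_of_tendsto hlim (eventually_mem_nhdsWithin.mono approx)
  · have := mul_nonneg hε.le (norm_nonneg (v - y))
    linarith [hys v]

end FrechetSubdifferential

theorem forall_mul_norm_add_apply_sub_le_iff
    {Y : Type*} [SeminormedAddCommGroup Y] [NormedSpace ℝ Y]
    {c : ℝ} (hc : 0 ≤ c) {u : Y} {ys : Y →L[ℝ] ℝ} :
    (∀ v, c * ‖u‖ + ys (v - u) ≤ c * ‖v‖) ↔ ‖ys‖ ≤ c ∧ ys u = c * ‖u‖ := by
  constructor
  · intro h
    have apply_le (k : Y) : ys k ≤ c * ‖k‖ := by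
      have hk := h (u + k)
      rw [add_sub_cancel_left] at hk
      linarith [mul_le_mul_of_nonneg_left (norm_add_le u k) hc]
    refine ⟨ys.opNorm_le_bound hc fun k => abs_le'.mpr ⟨apply_le k, ?_⟩, (apply_le u).antisymm ?_⟩
    · simpa using apply_le (-k)
    · simpa using h 0
  · rintro ⟨hnorm, hu⟩ v
    calc c * ‖u‖ + ys (v - u) = ys v := by rw [map_sub, hu, add_sub_cancel]
      _ ≤ c * ‖v‖ := (le_abs_self _).trans (ys.le_of_opNorm_le hnorm v)

section DualityMap

variable {Y : Type*} [NormedAddCommGroup Y] [NormedSpace ℝ Y]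

theorem dualityMap_nonempty {u : Y} (hu : u ≠ 0) : (dualityMap u).Nonempty :=
  exists_dual_vector ℝ u (norm_ne_zero_iff.mpr hu)

theorem mem_smul_image_dualityMap_iff {c : ℝ} (hc : 0 ≤ c) {u : Y} (hu : u ≠ 0)
    {ys : Y →L[ℝ] ℝ} :
    ys ∈ (fun us : Y →L[ℝ] ℝ => c • us) '' dualityMap u ↔ ‖ys‖ ≤ c ∧ ys u = c * ‖u‖ := by
  constructor
  · rintro ⟨us, ⟨hnorm, happly⟩, rfl⟩
    simp [norm_smul, hnorm, happly, abs_of_nonneg hc]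
  · rintro ⟨hle, happly⟩
    rcases hc.eq_or_lt with rfl | hpos
    · obtain ⟨us, hus⟩ := dualityMap_nonempty hu
      exact ⟨us, hus, by simp [norm_le_zero_iff.mp hle]⟩
    · have hge : c ≤ ‖ys‖ := by
        refine le_of_mul_le_mul_right ?_ (norm_pos_iff.mpr hu)
        exact happly ▸ (le_abs_self _).trans (ys.le_opNorm u)
      refine ⟨c⁻¹ • ys, ⟨?_, ?_⟩, smul_inv_smul₀ hpos.ne' ys⟩
      · rw [norm_smul, norm_inv, Real.norm_of_nonneg hc, hle.antisymm hge, inv_mul_cancel₀ hpos.ne']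
      · rw [smul_apply, happly, smul_eq_mul, inv_mul_cancel_left₀ hpos.ne']

theorem fSubdiff_const_mul_norm_sub {c : ℝ} (hc : 0 ≤ c) {y ybar : Y} (hy : y ≠ ybar) :
    fSubdiff (fun v => c * ‖v - ybar‖) y =
      (fun us : Y →L[ℝ] ℝ => c • us) '' dualityMap (y - ybar) := by
  have hconvex : ConvexOn ℝ univ fun v => c * ‖v - ybar‖ := by
    simpa only [dist_eq_norm, smul_eq_mul] using (convexOn_univ_dist ybar).smul hc
  ext ys
  rw [mem_fSubdiff_iff_of_convexOn hconvex, mem_smul_image_dualityMap_iff hc (sub_ne_zero.mpr hy),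
    ← forall_mul_norm_add_apply_sub_le_iff hc, (Equiv.subRight ybar).forall_congr_left]
  simp only [Equiv.subRight_symm_apply, add_sub_cancel_right, sub_sub_eq_add_sub]

theorem fSubdiff_phi_norm_general {φ : ℝ → ℝ} {c : ℝ} (hc : 0 ≤ c) {y ybar : Y} (hy : y ≠ ybar)
    (hφ : HasDerivAt φ c ‖y - ybar‖) :
    fSubdiff (fun v => φ ‖v - ybar‖) y =
      (fun us : Y →L[ℝ] ℝ => c • us) '' dualityMap (y - ybar) := by
  have hlipschitz : (fun v => ‖v - ybar‖ - ‖y - ybar‖) =O[𝓝 y] fun v => v - y :=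
    .of_bound' <| .of_forall fun v => by
      simpa only [Real.norm_eq_abs, sub_sub_sub_cancel_right]
        using abs_norm_sub_norm_le (v - ybar) (y - ybar)
  rw [fSubdiff_comp_eq_of_hasDerivAt (f := fun v => ‖v - ybar‖) hφ hlipschitz,
    fSubdiff_const_mul_norm_sub hc hy]

end DualityMap

/-- Proposition 6P1 (i): for `g = φ∘‖·−ȳ‖` and `y ≠ ȳ`,
`∂g(y) = φ'(‖y−ȳ‖)·J(y−ȳ)`. -/
theorem fSubdiff_phi_norm {Y : Type*} [NormedAddCommGroup Y] [NormedSpace ℝ Y]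
    (ybar : Y) (φ φ' : ℝ → ℝ) (D : EReal)
    (hφ0 : φ 0 = 0)
    (hφnonneg : ∀ t : ℝ, 0 ≤ t → 0 ≤ φ t)
    (hφc0 : ContinuousWithinAt φ (Set.Ici 0) 0)
    (hderiv : ∀ t : ℝ, 0 < t → HasDerivAt φ (φ' t) t)
    (hφ'pos : ∀ t : ℝ, 0 < t → 0 < φ' t)
    (hφ'cont : ContinuousOn φ' (Set.Ioi 0))
    (hD : Filter.Tendsto (fun t : ℝ => ((φ' t : ℝ) : EReal)) (𝓝[>] (0:ℝ)) (𝓝 D))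
    (hDpos : 0 < D)
    (y : Y) (hy : y ≠ ybar) :
    fSubdiff (fun v => φ ‖v - ybar‖) y =
      (fun us : Y →L[ℝ] ℝ => φ' ‖y - ybar‖ • us) '' dualityMap (y - ybar) := by
  have hr : 0 < ‖y - ybar‖ := norm_sub_pos_iff.mpr hy
  exact fSubdiff_phi_norm_general (hφ'pos _ hr).le hy (hderiv _ hr)
end

section
/- Let X and Y be normed linear spaces, F : X ⇉ Y a set-valued mapping, (x̄,ȳ) ∈ gph F, and φ : [0,∞) → [0,∞) continuously differentiable with φ(0)=0 and φ'(t)>0 for all t≥0. Then |∂F|_φ(x̄,ȳ) ≥ lim_{ρ↓0} inf{ φ'(‖y−ȳ‖)·|∂F|_ρ(x,y) : (x,y)∈gph F, x∉F⁻¹(ȳ), ‖x−x̄‖<ρ, ‖y−ȳ‖<ρ }, and if moreover φ'(0) < ∞, this inequality holds as an equality. -/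
open Filter Metric Set Topology ENNReal

/-- The subdifferential ρ-slope of `F`:
`|∂F|_ρ(x,y) = inf{‖x*‖ : x* ∈ D*F(x,y)(J(y−ȳ)+ρB*)}`. -/
noncomputable def subdiffSlopeJ {X Y : Type*} [NormedAddCommGroup X] [NormedSpace ℝ X]
    [NormedAddCommGroup Y] [NormedSpace ℝ Y]
    (F : X → Set Y) (ybar : Y) (ρ : ℝ) (p : X × Y) : ℝ≥0∞ :=
  ⨅ (xs : X →L[ℝ] ℝ) (_ : ∃ ys us : Y →L[ℝ] ℝ, us ∈ dualityMap (p.2 - ybar) ∧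
      ‖ys - us‖ ≤ ρ ∧ (xs, -ys) ∈ prodNormalCone (svGraph F) p),
    ENNReal.ofReal ‖xs‖

/-- The strict subdifferential φ-slope `|∂F|_φ(x̄,ȳ)`. -/
noncomputable def strictSubdiffPhiSlope {X Y : Type*}
    [NormedAddCommGroup X] [NormedSpace ℝ X] [NormedAddCommGroup Y] [NormedSpace ℝ Y]
    (F : X → Set Y) (φ' : ℝ → ℝ) (xbar : X) (ybar : Y) : ℝ≥0∞ :=
  ⨆ (ρ : ℝ) (_ : 0 < ρ),
    ⨅ (p : X × Y) (_ : p ∈ svGraph F ∧ ybar ∉ F p.1 ∧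
        dist p.1 xbar < ρ ∧ dist p.2 ybar < ρ),
      ENNReal.ofReal (φ' ‖p.2 - ybar‖) *
        subdiffSlopeJ F ybar ((φ' ‖p.2 - ybar‖)⁻¹ * ρ) p

/-!
The radius enters `subdiffSlopeJ` antitonically, so two strict slopes differing only in the radius
at which it is evaluated are compared by comparing radii: for every `ρ` one needs `ρ' ≤ ρ` such
that the radii belonging to `ρ'` are below those belonging to `ρ`. The radii in question are `ρ`
and `ρ / φ'(t)` with `t = ‖y - ȳ‖ > 0` small. If `φ' ≥ c > 0` near `0⁺`, then
`ρ' / φ'(t) ≤ ρ` as soon as `ρ' ≤ c ρ`; if `φ' ≤ C` near `0⁺`, then `ρ' ≤ ρ / φ'(t)` as soon as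
`ρ' ≤ ρ / C`.
-/

theorem eventually_forall_mem_Ioo_of_eventually_nhdsGT {α : Type*} [LinearOrder α]
    [TopologicalSpace α] [OrderTopology α] [NoMaxOrder α] {a : α} {P : α → Prop}
    (h : ∀ᶠ t in 𝓝[>] a, P t) : ∀ᶠ b in 𝓝[>] a, ∀ t ∈ Ioo a b, P t := by
  obtain ⟨b, hab, hP⟩ := (nhdsGT_basis a).eventually_iff.1 h
  filter_upwards [Ioc_mem_nhdsGT hab] with b' hb' t ht
  exact hP ⟨ht.1, ht.2.trans_le hb'.2⟩

section Slopes

variable {X Y : Type*} [NormedAddCommGroup X] [NormedSpace ℝ X]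
  [NormedAddCommGroup Y] [NormedSpace ℝ Y]

theorem subdiffSlopeJ_antitone (F : X → Set Y) (ybar : Y) (p : X × Y) :
    Antitone fun ρ => subdiffSlopeJ F ybar ρ p := by
  intro a b hab
  refine le_iInf₂ fun xs hxs => ?_
  obtain ⟨ys, us, hus, hdist, hnormal⟩ := hxs
  exact iInf₂_le xs ⟨ys, us, hus, hdist.trans hab, hnormal⟩

/-- The strict slope of `F` at `(xbar, ybar)` with weight `w` and radius function `r`: the limit as
`ρ ↓ 0` of the infima of `w(‖y - ȳ‖) · |∂F|_{r(‖y - ȳ‖, ρ)}(x, y)`. The limit is encoded as a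
supremum over `ρ > 0`, as in `strictSubdiffPhiSlope`, which is the case `r t ρ = (w t)⁻¹ * ρ`;
the right-hand side of the theorem is the case `r t ρ = ρ`. -/
noncomputable def strictRadiusSlope (F : X → Set Y) (w : ℝ → ℝ) (r : ℝ → ℝ → ℝ)
    (xbar : X) (ybar : Y) : ℝ≥0∞ :=
  ⨆ (ρ : ℝ) (_ : 0 < ρ),
    ⨅ (p : X × Y) (_ : p ∈ svGraph F ∧ ybar ∉ F p.1 ∧
        dist p.1 xbar < ρ ∧ dist p.2 ybar < ρ),
      ENNReal.ofReal (w ‖p.2 - ybar‖) * subdiffSlopeJ F ybar (r ‖p.2 - ybar‖ ρ) p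

variable (F : X → Set Y) {w : ℝ → ℝ} (xbar : X) (ybar : Y)

theorem strictRadiusSlope_le_of_eventually_radius_le {r s : ℝ → ℝ → ℝ}
    (h : ∀ ρ > 0, ∀ᶠ ρ' in 𝓝[>] (0 : ℝ), ∀ t ∈ Ioo 0 ρ', s t ρ' ≤ r t ρ) :
    strictRadiusSlope F w r xbar ybar ≤ strictRadiusSlope F w s xbar ybar := by
  refine iSup₂_le fun ρ hρ => ?_
  obtain ⟨ρ', hradius, hρ'pos, hρ'le⟩ := ((h ρ hρ).and (Ioc_mem_nhdsGT hρ)).exists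
  refine le_iSup₂_of_le ρ' hρ'pos (le_iInf₂ fun p ⟨hp, hybar, hx, hy⟩ => ?_)
  refine iInf₂_le_of_le p ⟨hp, hybar, hx.trans_le hρ'le, hy.trans_le hρ'le⟩ ?_
  have hne : p.2 ≠ ybar := fun heq => hybar (heq ▸ hp)
  have hnorm : ‖p.2 - ybar‖ ∈ Ioo 0 ρ' :=
    ⟨norm_sub_pos_iff.2 hne, by rwa [← dist_eq_norm]⟩
  gcongr
  exact subdiffSlopeJ_antitone F ybar p (hradius _ hnorm)

theorem strictRadiusSlope_le_strictSubdiffPhiSlope {c : ℝ} (hc : 0 < c)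
    (hw : ∀ᶠ t in 𝓝[>] 0, c ≤ w t) :
    strictRadiusSlope F w (fun _ ρ => ρ) xbar ybar ≤ strictSubdiffPhiSlope F w xbar ybar := by
  refine strictRadiusSlope_le_of_eventually_radius_le F xbar ybar
    (s := fun t ρ => (w t)⁻¹ * ρ) fun ρ hρ => ?_
  filter_upwards [eventually_forall_mem_Ioo_of_eventually_nhdsGT hw,
    Ioc_mem_nhdsGT (mul_pos hc hρ)] with ρ' hcw hρ' t ht
  calc (w t)⁻¹ * ρ' ≤ c⁻¹ * (c * ρ) := by
        gcongr
        exacts [hρ'.1.le, hcw t ht, hρ'.2]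
    _ = ρ := inv_mul_cancel_left₀ hc.ne' ρ

theorem strictSubdiffPhiSlope_le_strictRadiusSlope {C : ℝ}
    (hw : ∀ᶠ t in 𝓝[>] 0, w t ∈ Ioc 0 C) :
    strictSubdiffPhiSlope F w xbar ybar ≤ strictRadiusSlope F w (fun _ ρ => ρ) xbar ybar := by
  have hC : 0 < C := by
    obtain ⟨t, hpos, hle⟩ := hw.exists
    exact hpos.trans_le hle
  refine strictRadiusSlope_le_of_eventually_radius_le F xbar ybar
    (r := fun t ρ => (w t)⁻¹ * ρ) fun ρ hρ => ?_
  filter_upwards [eventually_forall_mem_Ioo_of_eventually_nhdsGT hw,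
    Ioc_mem_nhdsGT (mul_pos (inv_pos.2 hC) hρ)] with ρ' hwC hρ' t ht
  obtain ⟨hpos, hle⟩ := hwC t ht
  calc ρ' ≤ C⁻¹ * ρ := hρ'.2
    _ ≤ (w t)⁻¹ * ρ := by gcongr

theorem strictSubdiffPhiSlope_ge_general
    (hw : 0 < liminf (fun t => (w t : EReal)) (𝓝[>] 0)) :
    strictRadiusSlope F w (fun _ ρ => ρ) xbar ybar ≤ strictSubdiffPhiSlope F w xbar ybar ∧
    (limsup (fun t => (w t : EReal)) (𝓝[>] 0) ≠ ⊤ →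
      strictSubdiffPhiSlope F w xbar ybar =
        strictRadiusSlope F w (fun _ ρ => ρ) xbar ybar) := by
  obtain ⟨c, hc, hcw⟩ := EReal.lt_iff_exists_real_btwn.1 hw
  have hc : 0 < c := EReal.coe_pos.1 hc
  have hcw : ∀ᶠ t in 𝓝[>] 0, c ≤ w t :=
    (eventually_lt_of_lt_liminf hcw).mono fun t ht => (EReal.coe_lt_coe_iff.1 ht).le
  have hge := strictRadiusSlope_le_strictSubdiffPhiSlope F xbar ybar hc hcw
  refine ⟨hge, fun htop => le_antisymm ?_ hge⟩
  obtain ⟨C, hwC, -⟩ := EReal.lt_iff_exists_real_btwn.1 htop.lt_top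
  apply strictSubdiffPhiSlope_le_strictRadiusSlope F xbar ybar (C := C)
  filter_upwards [hcw, eventually_lt_of_limsup_lt hwC] with t hct htC
  exact ⟨hc.trans_le hct, (EReal.coe_lt_coe_iff.1 htC).le⟩

end Slopes

/-- Proposition 6P2 (i): the strict subdifferential φ-slope dominates the corresponding
quantity built from the subdifferential ρ-slopes without the factor `ξ_φ(y)`; if
`φ'(0) < ∞`, this inequality holds as an equality. -/
theorem strictSubdiffPhiSlope_ge {X Y : Type*}
    [NormedAddCommGroup X] [NormedSpace ℝ X] [NormedAddCommGroup Y] [NormedSpace ℝ Y]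
    (F : X → Set Y) (xbar : X) (ybar : Y)
    (hgraph : ybar ∈ F xbar)
    (φ φ' : ℝ → ℝ) (D : EReal)
    (hφ0 : φ 0 = 0)
    (hφnonneg : ∀ t : ℝ, 0 ≤ t → 0 ≤ φ t)
    (hφc0 : ContinuousWithinAt φ (Set.Ici 0) 0)
    (hderiv : ∀ t : ℝ, 0 < t → HasDerivAt φ (φ' t) t)
    (hφ'pos : ∀ t : ℝ, 0 < t → 0 < φ' t)
    (hφ'cont : ContinuousOn φ' (Set.Ioi 0))
    (hD : Filter.Tendsto (fun t : ℝ => ((φ' t : ℝ) : EReal)) (𝓝[>] (0:ℝ)) (𝓝 D))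
    (hDpos : 0 < D) :
    (⨆ (ρ : ℝ) (_ : 0 < ρ),
      ⨅ (p : X × Y) (_ : p ∈ svGraph F ∧ ybar ∉ F p.1 ∧
          dist p.1 xbar < ρ ∧ dist p.2 ybar < ρ),
        ENNReal.ofReal (φ' ‖p.2 - ybar‖) * subdiffSlopeJ F ybar ρ p)
      ≤ strictSubdiffPhiSlope F φ' xbar ybar ∧
    (D ≠ ⊤ →
      strictSubdiffPhiSlope F φ' xbar ybar =
        ⨆ (ρ : ℝ) (_ : 0 < ρ),
          ⨅ (p : X × Y) (_ : p ∈ svGraph F ∧ ybar ∉ F p.1 ∧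
              dist p.1 xbar < ρ ∧ dist p.2 ybar < ρ),
            ENNReal.ofReal (φ' ‖p.2 - ybar‖) * subdiffSlopeJ F ybar ρ p) := by
  rw [← hD.limsup_eq]
  exact strictSubdiffPhiSlope_ge_general F xbar ybar (hD.liminf_eq.symm ▸ hDpos)
end

section
/- Let X and Y be normed linear spaces, F : X ⇉ Y a set-valued mapping whose graph is convex, (x̄,ȳ) ∈ gph F, and φ : [0,∞) → [0,∞) continuously differentiable with φ(0)=0 and φ'(t)>0 for all t≥0. Then θ[φ]·sr_φ[F](x̄,ȳ) ≤ |∂F|_φ(x̄,ȳ), where θ[φ] := liminf_{t↓0} t·φ'(t)/φ(t). -/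
open Filter Metric Set Topology ENNReal

/-- The modulus of metric φ-subregularity
`sr_φ[F](x̄,ȳ) = liminf_{x→x̄, x∉F⁻¹(ȳ)} φ(d(ȳ,F(x)))/d(x,F⁻¹(ȳ))`.
(The value `φ(d(ȳ,F(x)))` is encoded as `inf_{y ∈ F(x)} φ(d(ȳ,y))`, which equals `+∞`
when `F(x) = ∅`.) -/
noncomputable def srPhi {X Y : Type*} [NormedAddCommGroup X] [NormedAddCommGroup Y]
    (F : X → Set Y) (φ : ℝ → ℝ) (xbar : X) (ybar : Y) : ℝ≥0∞ :=
  ⨆ (δ : ℝ) (_ : 0 < δ),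
    ⨅ (x : X) (_ : dist x xbar < δ ∧ ybar ∉ F x),
      (⨅ (y : Y) (_ : y ∈ F x), ENNReal.ofReal (φ (dist ybar y))) /
        ENNReal.ofReal (Metric.infDist x {u : X | ybar ∈ F u})

/-- The constant `θ[φ] = liminf_{t↓0} t·φ'(t)/φ(t)`. -/
noncomputable def thetaPhi (φ φ' : ℝ → ℝ) : ℝ≥0∞ :=
  Filter.liminf (fun t : ℝ => ENNReal.ofReal (t * φ' t / φ t)) (𝓝[>] (0:ℝ))

/-!
A Fréchet normal `(x*, -y*)` at a point `(x, y)` of a star-shaped graph separates: its pairing with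
`(u - x, ȳ - y)` is nonpositive for every `u ∈ F⁻¹(ȳ)`. Hence `⟨y*, y - ȳ⟩ ≤ ‖x*‖ d(x, F⁻¹(ȳ))`,
while `y*` being `ε`-close to `J(y - ȳ)` gives `(1 - ε) ‖y - ȳ‖ ≤ ⟨y*, y - ȳ⟩`. With `t = ‖y - ȳ‖`,
`α < θ[φ]` and `β < sr_φ[F]`, near `(x̄, ȳ)` this reads
`α β d(x, F⁻¹(ȳ)) ≤ α φ(t) ≤ t φ'(t) ≤ φ'(t) ‖x*‖ d(x, F⁻¹(ȳ)) / (1 - ε)`.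
Since `φ'` is bounded away from zero near `0`, the radius `ε = ρ / φ'(t)` tends to zero with `ρ`.
-/

section OneVariable

theorem eventually_lt_of_eventually_hasDerivAt_pos {f f' : ℝ → ℝ} {a : ℝ}
    (hcont : ContinuousWithinAt f (Ici a) a)
    (hderiv : ∀ᶠ t in 𝓝[>] a, HasDerivAt f (f' t) t) (hpos : ∀ᶠ t in 𝓝[>] a, 0 < f' t) :
    ∀ᶠ t in 𝓝[>] a, f a < f t := by
  obtain ⟨b, hab, hb⟩ := mem_nhdsGT_iff_exists_Ioo_subset.mp (hderiv.and hpos)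
  have hmono : StrictMonoOn f (Ico a b) := by
    refine strictMonoOn_of_deriv_pos (convex_Ico a b) (fun t ht => ?_) fun t ht => ?_
    · rcases ht.1.eq_or_lt with rfl | hat
      · exact hcont.mono Ico_subset_Ici_self
      · exact (hb ⟨hat, ht.2⟩).1.continuousAt.continuousWithinAt
    · rw [interior_Ico] at ht
      exact (hb ht).1.deriv ▸ (hb ht).2
  filter_upwards [Ioo_mem_nhdsGT hab] with t ht
  exact hmono (left_mem_Ico.mpr hab) ⟨ht.1.le, ht.2⟩ ht.1

theorem eventually_mul_ofReal_le_of_lt_thetaPhi {φ φ' : ℝ → ℝ} {α : ℝ≥0∞}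
    (hα : α < thetaPhi φ φ') (hφ : ∀ᶠ t in 𝓝[>] 0, 0 < φ t) :
    ∀ᶠ t in 𝓝[>] 0, α * ENNReal.ofReal (φ t) ≤ ENNReal.ofReal (t * φ' t) := by
  filter_upwards [eventually_lt_of_lt_liminf hα, hφ] with t hαt hφt
  rw [ENNReal.ofReal_div_of_pos hφt] at hαt
  exact ENNReal.mul_le_of_le_div hαt.le

theorem exists_pos_eventually_lt_of_liminf_coe_pos {ι : Type*} {l : Filter ι} {f : ι → ℝ}
    (hf : 0 < liminf (fun i => (f i : EReal)) l) : ∃ c > 0, ∀ᶠ i in l, c < f i := by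
  obtain ⟨c, hc_pos, hc_lt⟩ := EReal.lt_iff_exists_real_btwn.mp hf
  exact ⟨c, EReal.coe_pos.mp hc_pos,
    (eventually_lt_of_lt_liminf hc_lt).mono fun _ => EReal.coe_lt_coe_iff.mp⟩

end OneVariable

theorem le_mul_infDist {E : Type*} [PseudoMetricSpace E] {s : Set E} (hs : s.Nonempty) {x : E}
    {a c : ℝ} (hc : 0 ≤ c) (h : ∀ u ∈ s, a ≤ c * dist x u) : a ≤ c * infDist x s := by
  have := hs.to_subtype
  rw [infDist_eq_iInf, Real.mul_iInf_of_nonneg hc]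
  exact le_ciInf fun u => h u u.2

theorem tendsto_lineMap_nhdsWithin_diff_singleton {E : Type*} [AddCommGroup E] [Module ℝ E]
    [TopologicalSpace E] [IsTopologicalAddGroup E] [ContinuousSMul ℝ E] {Ω : Set E} {p q : E}
    (hΩ : StarConvex ℝ q Ω) (hp : p ∈ Ω) (hqp : q ≠ p) :
    Tendsto (AffineMap.lineMap p q : ℝ → E) (𝓝[>] 0) (𝓝[Ω \ {p}] p) := by
  refine tendsto_nhdsWithin_iff.mpr ⟨?_, ?_⟩
  · have hcont : Continuous (AffineMap.lineMap p q : ℝ → E) := AffineMap.lineMap_continuous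
    simpa using (hcont.tendsto 0).mono_left nhdsWithin_le_nhds
  · filter_upwards [Ioo_mem_nhdsGT one_pos] with τ ⟨hτ_pos, hτ_lt⟩
    refine ⟨?_, ?_⟩
    · rw [AffineMap.lineMap_apply_module, add_comm]
      exact hΩ hp hτ_pos.le (sub_nonneg.mpr hτ_lt.le) (add_sub_cancel _ _)
    · simp [hqp.symm, hτ_pos.ne']

section SetValued

variable {X Y : Type*} [NormedAddCommGroup X] [NormedAddCommGroup Y]

theorem exists_pos_forall_mul_infDist_le_of_lt_srPhi {F : X → Set Y} {φ : ℝ → ℝ} {xbar : X}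
    {ybar : Y} {β : ℝ≥0∞} (hβ : β < srPhi F φ xbar ybar) :
    ∃ δ > 0, ∀ p ∈ svGraph F, dist p.1 xbar < δ → ybar ∉ F p.1 →
      β * ENNReal.ofReal (infDist p.1 {u | ybar ∈ F u}) ≤ ENNReal.ofReal (φ ‖p.2 - ybar‖) := by
  simp only [srPhi, lt_iSup_iff] at hβ
  obtain ⟨δ, hδ, hβ⟩ := hβ
  refine ⟨δ, hδ, fun p hp hpx hpF => ?_⟩
  rw [← dist_eq_norm, dist_comm]
  exact (ENNReal.mul_le_of_le_div (hβ.le.trans (iInf₂_le p.1 ⟨hpx, hpF⟩))).trans (iInf₂_le p.2 hp)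

variable [NormedSpace ℝ Y]

theorem one_sub_mul_norm_le_apply_of_mem_dualityMap {v : Y} {us ys : Y →L[ℝ] ℝ} {ε : ℝ}
    (hus : us ∈ dualityMap v) (hys : ‖ys - us‖ ≤ ε) : (1 - ε) * ‖v‖ ≤ ys v := by
  have hdiff : us v - ys v ≤ ε * ‖v‖ := calc
    us v - ys v ≤ ‖(us - ys) v‖ := Real.le_norm_self _
    _ ≤ ε * ‖v‖ := (us - ys).le_of_opNorm_le (norm_sub_rev us ys ▸ hys) v
  linarith [hus.2]

variable [NormedSpace ℝ X]

theorem apply_sub_add_apply_sub_nonpos_of_mem_prodNormalCone {Ω : Set (X × Y)} {p q : X × Y}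
    {s : (X →L[ℝ] ℝ) × (Y →L[ℝ] ℝ)} (hΩ : StarConvex ℝ q Ω) (hs : s ∈ prodNormalCone Ω p) :
    s.1 (q.1 - p.1) + s.2 (q.2 - p.2) ≤ 0 := by
  obtain ⟨hp, hs⟩ := hs
  rcases eq_or_ne q p with rfl | hqp
  · simp
  have hnorm : 0 < ‖q - p‖ := norm_sub_pos_iff.mpr hqp
  refine le_of_forall_pos_le_add fun ε hε => ?_
  have htendsto := tendsto_lineMap_nhdsWithin_diff_singleton hΩ hp hqp
  obtain ⟨τ, hτ, hτ_pos : 0 < τ⟩ :=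
    ((htendsto.eventually (hs (ε / ‖q - p‖) (by positivity))).and self_mem_nhdsWithin).exists
  have hline : AffineMap.lineMap p q τ - p = τ • (q - p) := by
    simp [AffineMap.lineMap_apply_module']
  rw [← Prod.fst_sub, ← Prod.snd_sub, hline, Prod.smul_fst, Prod.smul_snd, map_smul, map_smul,
    ← smul_add, norm_smul_of_nonneg hτ_pos.le, smul_eq_mul, mul_left_comm,
    div_mul_cancel₀ _ hnorm.ne'] at hτ
  rw [zero_add]
  exact le_of_mul_le_mul_left hτ hτ_pos

variable {F : X → Set Y} {ybar : Y} {p : X × Y}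

theorem apply_sub_le_norm_mul_infDist_of_mem_prodNormalCone {xs : X →L[ℝ] ℝ} {ys : Y →L[ℝ] ℝ}
    (hne : {u | ybar ∈ F u}.Nonempty)
    (hstar : ∀ u, ybar ∈ F u → StarConvex ℝ (u, ybar) (svGraph F))
    (hnormal : (xs, -ys) ∈ prodNormalCone (svGraph F) p) :
    ys (p.2 - ybar) ≤ ‖xs‖ * infDist p.1 {u | ybar ∈ F u} := by
  refine le_mul_infDist hne (norm_nonneg xs) fun u hu => ?_
  have hsep : xs (u - p.1) + (-ys) (ybar - p.2) ≤ 0 :=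
    apply_sub_add_apply_sub_nonpos_of_mem_prodNormalCone (hstar u hu) hnormal
  calc ys (p.2 - ybar) = (-ys) (ybar - p.2) := by simp
    _ ≤ xs (p.1 - u) := by rw [← neg_sub u, map_neg]; linarith
    _ ≤ ‖xs (p.1 - u)‖ := Real.le_norm_self _
    _ ≤ ‖xs‖ * dist p.1 u := dist_eq_norm p.1 u ▸ xs.le_opNorm _

theorem ofReal_div_infDist_le_subdiffSlopeJ (hne : {u | ybar ∈ F u}.Nonempty)
    (hstar : ∀ u, ybar ∈ F u → StarConvex ℝ (u, ybar) (svGraph F)) (ε : ℝ) :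
    ENNReal.ofReal ((1 - ε) * ‖p.2 - ybar‖) / ENNReal.ofReal (infDist p.1 {u | ybar ∈ F u}) ≤
      subdiffSlopeJ F ybar ε p := by
  refine le_iInf₂ fun xs ⟨ys, us, hus, hys, hnormal⟩ => ENNReal.div_le_of_le_mul ?_
  rw [← ENNReal.ofReal_mul (norm_nonneg xs)]
  exact ENNReal.ofReal_le_ofReal ((one_sub_mul_norm_le_apply_of_mem_dualityMap hus hys).trans
    (apply_sub_le_norm_mul_infDist_of_mem_prodNormalCone hne hstar hnormal))

theorem mul_le_ofReal_mul_subdiffSlopeJ {α β : ℝ≥0∞} {κ : NNReal} {m s ε : ℝ}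
    (hne : {u | ybar ∈ F u}.Nonempty)
    (hstar : ∀ u, ybar ∈ F u → StarConvex ℝ (u, ybar) (svGraph F))
    (hp : p.2 ≠ ybar) (hm : 0 < m) (hκ : κ ≤ 1 - ε)
    (hα : α * ENNReal.ofReal s ≤ ENNReal.ofReal (‖p.2 - ybar‖ * m))
    (hβ : β * ENNReal.ofReal (infDist p.1 {u | ybar ∈ F u}) ≤ ENNReal.ofReal s) :
    κ * (α * β) ≤ ENNReal.ofReal m * subdiffSlopeJ F ybar ε p := by
  set t := ‖p.2 - ybar‖
  set d := ENNReal.ofReal (infDist p.1 {u | ybar ∈ F u})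
  have ht : 0 < t := norm_sub_pos_iff.mpr hp
  have hκ' : (κ : ℝ≥0∞) ≤ ENNReal.ofReal (1 - ε) := by
    simpa using ENNReal.ofReal_le_ofReal hκ
  have hαβ : α * β ≤ ENNReal.ofReal (t * m) / d := by
    refine (ENNReal.le_div_iff_mul_le (Or.inr ?_) (Or.inr ENNReal.ofReal_ne_top)).mpr ?_
    · exact (ENNReal.ofReal_pos.mpr (mul_pos ht hm)).ne'
    · calc α * β * d = α * (β * d) := mul_assoc α β d
        _ ≤ α * ENNReal.ofReal s := by gcongr
        _ ≤ ENNReal.ofReal (t * m) := hα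
  calc κ * (α * β) ≤ ENNReal.ofReal (1 - ε) * (ENNReal.ofReal (t * m) / d) := by gcongr
    _ = ENNReal.ofReal m * (ENNReal.ofReal ((1 - ε) * t) / d) := by
      rw [ENNReal.ofReal_mul ht.le, ENNReal.ofReal_mul' ht.le, div_eq_mul_inv, div_eq_mul_inv]
      ring
    _ ≤ ENNReal.ofReal m * subdiffSlopeJ F ybar ε p := by
      gcongr
      exact ofReal_div_infDist_le_subdiffSlopeJ hne hstar ε

end SetValued

theorem theta_mul_srPhi_le_strictSubdiffPhiSlope_general {X Y : Type*}
    [NormedAddCommGroup X] [NormedSpace ℝ X] [NormedAddCommGroup Y] [NormedSpace ℝ Y]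
    {F : X → Set Y} {xbar : X} {ybar : Y} {φ φ' : ℝ → ℝ}
    (hne : {u | ybar ∈ F u}.Nonempty)
    (hstar : ∀ u, ybar ∈ F u → StarConvex ℝ (u, ybar) (svGraph F))
    (hφ0 : φ 0 = 0)
    (hφc0 : ContinuousWithinAt φ (Ici 0) 0)
    (hderiv : ∀ᶠ t in 𝓝[>] 0, HasDerivAt φ (φ' t) t)
    (hφ' : 0 < liminf (fun t => (φ' t : EReal)) (𝓝[>] 0)) :
    thetaPhi φ φ' * srPhi F φ xbar ybar ≤ strictSubdiffPhiSlope F φ' xbar ybar := by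
  refine ENNReal.mul_le_of_forall_lt fun α hα β hβ =>
    ENNReal.le_of_forall_lt_one_mul_le fun κ hκ => ?_
  lift κ to NNReal using hκ.ne_top
  have hκ_sub_pos : 0 < 1 - (κ : ℝ) := sub_pos.mpr (by exact_mod_cast hκ)
  obtain ⟨c, hc_pos, hc⟩ := exists_pos_eventually_lt_of_liminf_coe_pos hφ'
  have hφ_pos : ∀ᶠ t in 𝓝[>] 0, 0 < φ t := by
    simpa only [hφ0] using
      eventually_lt_of_eventually_hasDerivAt_pos hφc0 hderiv (hc.mono fun _ => hc_pos.trans)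
  obtain ⟨r, hr_pos : 0 < r, hr⟩ := mem_nhdsGT_iff_exists_Ioo_subset.mp
    (hc.and (eventually_mul_ofReal_le_of_lt_thetaPhi hα hφ_pos))
  obtain ⟨δ, hδ_pos, hδ⟩ := exists_pos_forall_mul_infDist_le_of_lt_srPhi hβ
  obtain ⟨ρ, hρ_pos, hρ⟩ : ∃ ρ > 0, ρ ≤ r ∧ ρ ≤ δ ∧ ρ ≤ (1 - κ) * c :=
    ⟨min r (min δ ((1 - κ) * c)), by positivity, by simp⟩
  refine le_iSup₂_of_le ρ hρ_pos (le_iInf₂ fun p ⟨hpF, hpbar, hpx, hpy⟩ => ?_)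
  have hp : p.2 ≠ ybar := fun h => hpbar (h ▸ hpF)
  obtain ⟨hct, hαt⟩ := hr ⟨norm_sub_pos_iff.mpr hp, dist_eq_norm p.2 ybar ▸ hpy.trans_le hρ.1⟩
  have hφ't : 0 < φ' ‖p.2 - ybar‖ := hc_pos.trans hct
  have hradius : (φ' ‖p.2 - ybar‖)⁻¹ * ρ ≤ 1 - κ := by
    rw [inv_mul_le_iff₀' hφ't]
    exact hρ.2.2.trans (by gcongr)
  exact mul_le_ofReal_mul_subdiffSlopeJ hne hstar hp hφ't (le_sub_comm.mp hradius) hαt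
    (hδ p hpF (hpx.trans_le hρ.2.1) hpbar)

/-- Proposition `iti`: if `F` has convex graph, then
`θ[φ]·sr_φ[F](x̄,ȳ) ≤ |∂F|_φ(x̄,ȳ)`. -/
theorem theta_mul_srPhi_le_strictSubdiffPhiSlope {X Y : Type*}
    [NormedAddCommGroup X] [NormedSpace ℝ X] [NormedAddCommGroup Y] [NormedSpace ℝ Y]
    (F : X → Set Y) (xbar : X) (ybar : Y)
    (hgraph : ybar ∈ F xbar)
    (hFconv : Convex ℝ (svGraph F))
    (φ φ' : ℝ → ℝ) (D : EReal)
    (hφ0 : φ 0 = 0)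
    (hφnonneg : ∀ t : ℝ, 0 ≤ t → 0 ≤ φ t)
    (hφc0 : ContinuousWithinAt φ (Set.Ici 0) 0)
    (hderiv : ∀ t : ℝ, 0 < t → HasDerivAt φ (φ' t) t)
    (hφ'pos : ∀ t : ℝ, 0 < t → 0 < φ' t)
    (hφ'cont : ContinuousOn φ' (Set.Ioi 0))
    (hD : Filter.Tendsto (fun t : ℝ => ((φ' t : ℝ) : EReal)) (𝓝[>] (0:ℝ)) (𝓝 D))
    (hDpos : 0 < D) :
    thetaPhi φ φ' * srPhi F φ xbar ybar ≤ strictSubdiffPhiSlope F φ' xbar ybar := by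
  exact theta_mul_srPhi_le_strictSubdiffPhiSlope_general ⟨xbar, hgraph⟩ (fun _ hu => hFconv hu) hφ0
    hφc0 (eventually_nhdsWithin_of_forall hderiv) (hD.liminf_eq.symm ▸ hDpos)
end
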